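/- Let L be a timed language recognized by a K-acceptor, and let u, v ∈ (Σ_K)* be small half-integral words. Then u ≈^{L,K} v if and only if c^K_⊤(u) = c^K_⊤(v) and for every word z ∈ (Σ_K)*, uz ∈ L if and only if vz ∈ L. -/

import Mathlib

open scoped NNReal Classical

namespace IRTA

/-- A timestamp is a finite sequence of non-negative reals. -/
abbrev Timestamp : Type := List ℝ≥0

/-- A timed word is a finite sequence of (delay, letter) pairs. -/
abbrev TimedWord (A : Type) : Type := List (ℝ≥0 × A)

/-- Fractional part of a non-negative real. -/
noncomputable def fracPart (x : ℝ≥0) : ℝ≥0 := x - (⌊x⌋₊ : ℝ≥0)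

/-- `x` is a natural-number value. -/
def IsNatVal (x : ℝ≥0) : Prop := ∃ m : ℕ, x = (m : ℝ≥0)

/-- Region equivalence `≡^K`. -/
def RegEq (K : ℕ) (x y : ℝ≥0) : Prop :=
  (⌊x⌋₊ = ⌊y⌋₊ ∧ (fracPart x = 0 ↔ fracPart y = 0)) ∨ ((K : ℝ≥0) < x ∧ (K : ℝ≥0) < y)

/-- One step of the (greedy) clock evolution: reset whenever the value is an
integer between `0` and `K`. -/
noncomputable def resetStep (K : ℕ) (v : ℝ≥0) : ℝ≥0 :=
  if ∃ m : ℕ, m ≤ K ∧ v = (m : ℝ≥0) then 0 else v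

/-- Auxiliary function computing `c^K` with accumulator `v`. -/
noncomputable def cKAux (K : ℕ) : ℝ≥0 → Timestamp → ℝ≥0
  | v, [] => v
  | v, t :: d => cKAux K (resetStep K (v + t)) d

/-- `c^K(d)`: the sum of the delays after the last integral position of `d`. -/
noncomputable def cK (K : ℕ) (d : Timestamp) : ℝ≥0 := cKAux K 0 d

/-- `c^K` of a timed word is `c^K` of its timestamp. -/
noncomputable def cKW {A : Type} (K : ℕ) (w : TimedWord A) : ℝ≥0 :=
  cK K (w.map Prod.fst)

/-- `c^K_⊤` : `c^K` truncated at `K`. -/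
noncomputable def cKTop {A : Type} (K : ℕ) (w : TimedWord A) : WithTop ℝ≥0 :=
  if cKW K w ≤ (K : ℝ≥0) then ((cKW K w : ℝ≥0) : WithTop ℝ≥0) else ⊤

/-! ### Clock constraints and one-clock timed automata -/

/-- Clock constraints `φ ::= x < m | m < x | x = m | φ ∧ φ`. -/
inductive CC : Type where
  | lt : ℕ → CC
  | gt : ℕ → CC
  | eq : ℕ → CC
  | and : CC → CC → CC

/-- Satisfaction of a clock constraint by a clock value. -/
def CC.sat : CC → ℝ≥0 → Prop
  | .lt m, x => x < (m : ℝ≥0)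
  | .gt m, x => (m : ℝ≥0) < x
  | .eq m, x => x = (m : ℝ≥0)
  | .and φ ψ, x => φ.sat x ∧ ψ.sat x

/-- The largest constant appearing in a clock constraint. -/
def CC.maxConst : CC → ℕ
  | .lt m => m
  | .gt m => m
  | .eq m => m
  | .and φ ψ => max φ.maxConst ψ.maxConst

/-- A transition of a one-clock timed automaton; `reset = true` means the
clock is reset (the `r = 0` case). -/
structure TTrans (Q A : Type) where
  src : Q
  dst : Q
  lab : A
  guard : CC
  reset : Bool

/-- A one-clock timed automaton. -/
structure TA (A : Type) where
  Q : Type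
  init : Q
  final : Set Q
  trans : Set (TTrans Q A)

/-- The automaton has finitely many states and transitions. -/
def TA.IsFinite {A : Type} (M : TA A) : Prop := Finite M.Q ∧ M.trans.Finite

/-- Runs of a one-clock timed automaton between configurations. -/
inductive Steps {A : Type} (M : TA A) : M.Q × ℝ≥0 → TimedWord A → M.Q × ℝ≥0 → Prop
  | nil (c : M.Q × ℝ≥0) : Steps M c [] c
  | cons {q : M.Q} {ν t : ℝ≥0} {a : A} {w : TimedWord A} {c : M.Q × ℝ≥0}
      (θ : TTrans M.Q A) (hθ : θ ∈ M.trans) (hsrc : θ.src = q) (hlab : θ.lab = a)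
      (hg : θ.guard.sat (ν + t))
      (hrest : Steps M (θ.dst, if θ.reset then 0 else ν + t) w c) :
      Steps M (q, ν) ((t, a) :: w) c

/-- The language of `M` from a given configuration. -/
def TA.LangFrom {A : Type} (M : TA A) (c : M.Q × ℝ≥0) : Set (TimedWord A) :=
  {w | ∃ q' : M.Q, ∃ ν' : ℝ≥0, Steps M c w (q', ν') ∧ q' ∈ M.final}

/-- The language of `M` (from the initial configuration). -/
def TA.Lang {A : Type} (M : TA A) : Set (TimedWord A) := M.LangFrom (M.init, 0)

/-- Determinism: distinct transitions with the same source and letter have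
disjoint guards. -/
def TA.Deterministic {A : Type} (M : TA A) : Prop :=
  ∀ θ₁ ∈ M.trans, ∀ θ₂ ∈ M.trans, θ₁ ≠ θ₂ → θ₁.src = θ₂.src → θ₁.lab = θ₂.lab →
    ∀ x : ℝ≥0, ¬ (θ₁.guard.sat x ∧ θ₂.guard.sat x)

/-- Completeness: every timed word admits a run from the initial configuration. -/
def TA.Complete {A : Type} (M : TA A) : Prop :=
  ∀ w : TimedWord A, ∃ c : M.Q × ℝ≥0, Steps M (M.init, 0) w c

/-- A 1-IRTA: every resetting transition has an equality guard. -/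
def TA.IsIRTA {A : Type} (M : TA A) : Prop :=
  ∀ θ ∈ M.trans, θ.reset = true → ∃ m : ℕ, θ.guard = CC.eq m

/-- Guards allowed in a strict 1-IRTA with constant `K`. -/
def StrictGuard (K : ℕ) (φ : CC) : Prop :=
  (∃ m : ℕ, φ = CC.eq m) ∨ (∃ m : ℕ, φ = CC.and (CC.gt m) (CC.lt (m + 1))) ∨ φ = CC.gt K

/-- Strictness with constant `K`: every guard is of one of the allowed forms
and a guard is an equality iff the transition resets. -/
def TA.IsStrict {A : Type} (M : TA A) (K : ℕ) : Prop :=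
  ∀ θ ∈ M.trans, StrictGuard K θ.guard ∧ ((∃ m : ℕ, θ.guard = CC.eq m) ↔ θ.reset = true)

/-- All constants appearing in guards are at most `K`. -/
def TA.MaxConstLE {A : Type} (M : TA A) (K : ℕ) : Prop :=
  ∀ θ ∈ M.trans, θ.guard.maxConst ≤ K

/-- `M` reaches the same control state on reading `u` and `v` from the initial
configuration. -/
def TA.SameState {A : Type} (M : TA A) (u v : TimedWord A) : Prop :=
  ∃ q : M.Q, ∃ ν ν' : ℝ≥0, Steps M (M.init, 0) u (q, ν) ∧ Steps M (M.init, 0) v (q, ν')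

/-- A `K`-acceptor. -/
def IsKAcceptor {A : Type} (M : TA A) (K : ℕ) : Prop :=
  M.IsFinite ∧ M.Complete ∧ M.Deterministic ∧ M.IsIRTA ∧ M.IsStrict K ∧ M.MaxConstLE K ∧
    ∀ u v : TimedWord A, M.SameState u v → RegEq K (cKW K u) (cKW K v)

/-! ### Equivalences on timed words -/

/-- `L`-preservation of a relation on timed words. -/
def LPreserving {A : Type} (L : Set (TimedWord A)) (r : TimedWord A → TimedWord A → Prop) :
    Prop :=
  ∀ u v : TimedWord A, r u v → (u ∈ L ↔ v ∈ L)

/-- `K`-monotonicity of a relation on timed words. -/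
def KMonotonic {A : Type} (K : ℕ) (r : TimedWord A → TimedWord A → Prop) : Prop :=
  ∀ u v : TimedWord A, r u v →
    RegEq K (cKW K u) (cKW K v) ∧
      ∀ (a : A) (t t' : ℝ≥0), RegEq K (cKW K u + t) (cKW K v + t') →
        r (u ++ [(t, a)]) (v ++ [(t', a)])

/-- Finite index: there are finitely many classes `{v | r u v}`. -/
def FiniteIndex {A : Type} (r : TimedWord A → TimedWord A → Prop) : Prop :=
  Set.Finite (Set.range fun u : TimedWord A => {v : TimedWord A | r u v})

/-! ### The rescaling maps -/

/-- The bijection `f_{λ→λ'}` of the open unit interval. -/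
noncomputable def fScale (lam lam' t : ℝ≥0) : ℝ≥0 :=
  if t ≤ lam then (lam' / lam) * t else lam' + ((1 - lam') / (1 - lam)) * (t - lam)

/-- The new delay `t'` computed from the current clock values `y, y'` and delay `t`. -/
noncomputable def tauStep (K : ℕ) (y y' t : ℝ≥0) : ℝ≥0 :=
  if (IsNatVal y ∧ IsNatVal y') ∨ ((K : ℝ≥0) < y ∧ (K : ℝ≥0) < y') then t
  else (⌊t⌋₊ : ℝ≥0) + fScale (1 - fracPart y) (1 - fracPart y') (fracPart t)

/-- Auxiliary rescaling map on timestamps, carrying the current clock values. -/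
noncomputable def tauAux (K : ℕ) : ℝ≥0 → ℝ≥0 → Timestamp → Timestamp
  | _, _, [] => []
  | y, y', t :: d =>
      tauStep K y y' t ::
        tauAux K (resetStep K (y + t)) (resetStep K (y' + tauStep K y y' t)) d

/-- The rescaling map `τ_{x→x'}` on timestamps. -/
noncomputable def tau (K : ℕ) (x x' : ℝ≥0) (d : Timestamp) : Timestamp :=
  tauAux K (resetStep K x) (resetStep K x') d

/-- Auxiliary rescaling map on timed words. -/
noncomputable def tauWAux {A : Type} (K : ℕ) : ℝ≥0 → ℝ≥0 → TimedWord A → TimedWord A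
  | _, _, [] => []
  | y, y', (t, a) :: w =>
      (tauStep K y y' t, a) ::
        tauWAux K (resetStep K (y + t)) (resetStep K (y' + tauStep K y y' t)) w

/-- The rescaling map `τ_{x→x'}` on timed words. -/
noncomputable def tauW {A : Type} (K : ℕ) (x x' : ℝ≥0) (w : TimedWord A) : TimedWord A :=
  tauWAux K (resetStep K x) (resetStep K x') w

/-! ### Residuals and the syntactic equivalence -/

/-- The residual language `u^{-1}L`. -/
def residual {A : Type} (L : Set (TimedWord A)) (u : TimedWord A) : Set (TimedWord A) :=
  {w : TimedWord A | u ++ w ∈ L}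

/-- The syntactic equivalence `≈^{L,K}`. -/
def ApproxLK {A : Type} (L : Set (TimedWord A)) (K : ℕ) (u v : TimedWord A) : Prop :=
  RegEq K (cKW K u) (cKW K v) ∧
    (tauW K (cKW K u) (cKW K v)) '' (residual L u) = residual L v

/-! ### The automaton built from a monotonic equivalence -/

/-- The region guard `φ([t])`. -/
noncomputable def phiOf (K : ℕ) (t : ℝ≥0) : CC :=
  if t ≤ (K : ℝ≥0) then
    (if IsNatVal t then CC.eq ⌊t⌋₊ else CC.and (CC.gt ⌊t⌋₊) (CC.lt (⌊t⌋₊ + 1)))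
  else CC.gt K

/-- The automaton `A_≈` built from an equivalence `s` on timed words. -/
noncomputable def Aapprox {A : Type} (L : Set (TimedWord A)) (K : ℕ)
    (s : Setoid (TimedWord A)) : TA A where
  Q := Quotient s
  init := Quotient.mk s ([] : TimedWord A)
  final := {q : Quotient s | ∃ u : TimedWord A, q = Quotient.mk s u ∧ u ∈ L}
  trans := {θ : TTrans (Quotient s) A |
    ∃ (u : TimedWord A) (a : A) (t : ℝ≥0),
      θ.src = Quotient.mk s u ∧ θ.dst = Quotient.mk s (u ++ [(t, a)]) ∧ θ.lab = a ∧
      θ.guard = phiOf K (cKW K u + t) ∧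
      (θ.reset = true ↔ ∃ m : ℕ, m ≤ K ∧ cKW K u + t = (m : ℝ≥0))}

/-! ### Half-integral and small words -/

/-- Every delay has fractional part `0` or `1/2`. -/
def HalfIntegral {A : Type} (w : TimedWord A) : Prop :=
  ∀ p ∈ w, fracPart p.1 = 0 ∨ fracPart p.1 = 1 / 2

/-- Every delay is `< K + 1`. -/
def SmallWord {A : Type} (K : ℕ) (w : TimedWord A) : Prop :=
  ∀ p ∈ w, p.1 < (K : ℝ≥0) + 1

/-- The delays of `Σ_K`: half-integral values `≤ K + 1/2`. -/
def IsSigmaK (K : ℕ) (t : ℝ≥0) : Prop :=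
  (fracPart t = 0 ∨ fracPart t = 1 / 2) ∧ t ≤ (K : ℝ≥0) + 1 / 2

/-- Words over `Σ_K` (small half-integral words). -/
def SigmaWord {A : Type} (K : ℕ) (w : TimedWord A) : Prop :=
  ∀ p ∈ w, IsSigmaK K p.1



/-! ### `K`-acceptors with their region representatives -/

/-- A `K`-acceptor bundled with the half-integral representative of the
unique region of each state. -/
structure KAcc (A : Type) (K : ℕ) where
  M : TA A
  acc : IsKAcceptor M K
  reg : M.Q → ℝ≥0
  regHalf : ∀ q : M.Q, fracPart (reg q) = 0 ∨ fracPart (reg q) = 1 / 2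
  regLe : ∀ q : M.Q, reg q ≤ (K : ℝ≥0) + 1 / 2
  regSpec : ∀ (w : TimedWord A) (q : M.Q) (x : ℝ≥0),
    Steps M (M.init, 0) w (q, x) → RegEq K x (reg q)

/-- The minimization equivalences `∼^i` on the states of a `K`-acceptor. -/
def simEq {A : Type} {K : ℕ} (B : KAcc A K) : ℕ → B.M.Q → B.M.Q → Prop
  | 0, p, q => B.reg p = B.reg q ∧ (p ∈ B.M.final ↔ q ∈ B.M.final)
  | i + 1, p, q => simEq B i p q ∧
      ∀ (t : ℝ≥0) (a : A), IsSigmaK K t →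
        ∀ θ₁ θ₂ : TTrans B.M.Q A, θ₁ ∈ B.M.trans → θ₂ ∈ B.M.trans →
          θ₁.src = p → θ₂.src = q → θ₁.lab = a → θ₂.lab = a →
          θ₁.guard = phiOf K t → θ₂.guard = phiOf K t →
          simEq B i θ₁.dst θ₂.dst

/-- The quotient automaton `B/∼^m`. -/
noncomputable def quotTA {A : Type} {K : ℕ} (B : KAcc A K) (m : ℕ) : TA A where
  Q := Quot (simEq B m)
  init := Quot.mk (simEq B m) B.M.init
  final := {c : Quot (simEq B m) | ∃ q ∈ B.M.final, c = Quot.mk (simEq B m) q}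
  trans := {θ : TTrans (Quot (simEq B m)) A |
    ∃ θ₀ ∈ B.M.trans,
      θ.src = Quot.mk (simEq B m) θ₀.src ∧ θ.dst = Quot.mk (simEq B m) θ₀.dst ∧
      θ.lab = θ₀.lab ∧ θ.guard = θ₀.guard ∧ θ.reset = θ₀.reset}

/-! ### Observation tables -/

/-- An observation table over `Σ_K`. -/
structure ObsTable (A : Type) (K : ℕ) where
  U1 : Set (TimedWord A)
  E : Set (TimedWord A)
  val : TimedWord A → TimedWord A → Bool
  U1fin : U1.Finite
  Efin : E.Finite
  U1sigma : ∀ u ∈ U1, SigmaWord K u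
  Esigma : ∀ e ∈ E, SigmaWord K e
  epsU1 : ([] : TimedWord A) ∈ U1
  prefixClosed : ∀ (u : TimedWord A) (x : ℝ≥0 × A), u ++ [x] ∈ U1 → u ∈ U1
  epsE : ([] : TimedWord A) ∈ E
  suffixClosed : ∀ (x : ℝ≥0 × A) (e : TimedWord A), x :: e ∈ E → e ∈ E

/-- The set `U2` of one-letter `Σ_K`-extensions of `U1`. -/
def obsU2 {A : Type} {K : ℕ} (T : ObsTable A K) : Set (TimedWord A) :=
  {w : TimedWord A | ∃ u ∈ T.U1, ∃ (t : ℝ≥0) (a : A), IsSigmaK K t ∧ w = u ++ [(t, a)]}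

/-- `R(u)`: the row of `u` (restricted to `E`) together with `c^K_⊤(u)`. -/
noncomputable def Rof {A : Type} {K : ℕ} (T : ObsTable A K) (u : TimedWord A) :
    ({e : TimedWord A // e ∈ T.E} → Bool) × WithTop ℝ≥0 :=
  (fun e => T.val u e.1, cKTop K u)

/-- The table is closed. -/
def ObsTable.Closed {A : Type} {K : ℕ} (T : ObsTable A K) : Prop :=
  ∀ w ∈ obsU2 T, ∃ u ∈ T.U1, Rof T w = Rof T u

/-- The table is consistent. -/
def ObsTable.Consistent {A : Type} {K : ℕ} (T : ObsTable A K) : Prop :=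
  ∀ u ∈ T.U1, ∀ w ∈ T.U1, Rof T u = Rof T w →
    ∀ (t : ℝ≥0) (a : A), IsSigmaK K t → Rof T (u ++ [(t, a)]) = Rof T (w ++ [(t, a)])

/-- The automaton `A_𝒯` induced by a (closed and consistent) observation table. -/
noncomputable def ATable {A : Type} {K : ℕ} (T : ObsTable A K) : TA A where
  Q := {f : ({e : TimedWord A // e ∈ T.E} → Bool) × WithTop ℝ≥0 // ∃ u ∈ T.U1, f = Rof T u}
  init := ⟨Rof T [], ⟨[], T.epsU1, rfl⟩⟩
  final := {q | ∃ u ∈ T.U1, q.1 = Rof T u ∧ T.val u [] = true}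
  trans := {θ | ∃ u ∈ T.U1, ∃ (t : ℝ≥0) (a : A), IsSigmaK K t ∧
      θ.src.1 = Rof T u ∧ θ.dst.1 = Rof T (u ++ [(t, a)]) ∧ θ.lab = a ∧
      θ.guard = phiOf K (cKW K u + t) ∧
      (θ.reset = true ↔ ∃ m : ℕ, m ≤ K ∧ cKW K u + t = (m : ℝ≥0))}

/-- A `K`-acceptor is consistent with the observation table `𝒯`. -/
def ConsistentWith {A : Type} {K : ℕ} (M : TA A) (T : ObsTable A K) : Prop :=
  ∀ w : TimedWord A, (w ∈ T.U1 ∨ w ∈ obsU2 T) → ∀ e ∈ T.E,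
    ∀ (q : M.Q) (ν : ℝ≥0), Steps M (M.init, 0) (w ++ e) (q, ν) →
      (q ∈ M.final ↔ T.val w e = true)

/-- Isomorphism of one-clock timed automata. -/
structure TAIso {A : Type} (M N : TA A) where
  toEquiv : M.Q ≃ N.Q
  init_eq : toEquiv M.init = N.init
  final_iff : ∀ q : M.Q, q ∈ M.final ↔ toEquiv q ∈ N.final
  trans_iff : ∀ θ : TTrans M.Q A,
    θ ∈ M.trans ↔
      (⟨toEquiv θ.src, toEquiv θ.dst, θ.lab, θ.guard, θ.reset⟩ : TTrans N.Q A) ∈ N.trans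

/-!
Write `ρ x = ⌊x⌋ + ⌈x⌉`. Then `x ≡^K y` iff `ρ x = ρ y` or both values exceed `K`, and `x` is
half-integral iff `x = ρ x / 2`. Hence on half-integral words `≡^K` of the clock values already
means equality of their truncations at `K`, the rescaling `τ` is the identity, and `≈^{L,K}`
amounts to equality of residuals.

To test residuals on `Σ_K` alone, fix an `L`-preserving `K`-monotonic relation and replace the
delays of a suffix `z` one at a time by half-integral ones that land in the same region. As `ρ` is
monotone, a non-negative such delay exists; as the clock values after `u` and `v` agree up to
truncation, the same delay serves both `u` and `v`. For a strict automaton the relation is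
"equivalent clock values and the same reachable states".
-/

section Regions

variable {K m n : ℕ} {x y z : ℝ≥0}

/-- The position, counted from `0`, of `x` in the partition `{0}, (0, 1), {1}, (1, 2), …` of the
half-line: all that clock constraints see of a clock value. -/
noncomputable def regionIndex (x : ℝ≥0) : ℕ := ⌊x⌋₊ + ⌈x⌉₊

theorem regionIndex_mono : Monotone regionIndex := fun _ _ h =>
  add_le_add (Nat.floor_mono h) (Nat.ceil_mono h)

theorem natCast_lt_iff_lt_regionIndex : (m : ℝ≥0) < x ↔ 2 * m < regionIndex x := by
  rw [← Nat.lt_ceil, regionIndex]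
  have := Nat.floor_le_ceil x
  have := Nat.ceil_le_floor_add_one x
  omega

theorem lt_natCast_iff_regionIndex_lt : x < m ↔ regionIndex x < 2 * m := by
  rw [← Nat.floor_lt zero_le, regionIndex]
  have := Nat.floor_le_ceil x
  have := Nat.ceil_le_floor_add_one x
  omega

theorem eq_natCast_iff_regionIndex_eq : x = m ↔ regionIndex x = 2 * m := by
  rw [le_antisymm_iff, ← not_lt, ← not_lt, natCast_lt_iff_lt_regionIndex,
    lt_natCast_iff_regionIndex_lt]
  omega

theorem floor_eq_regionIndex_div_two : ⌊x⌋₊ = regionIndex x / 2 := by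
  rw [regionIndex]
  have := Nat.floor_le_ceil x
  have := Nat.ceil_le_floor_add_one x
  omega

theorem regionIndex_natCast_div_two : regionIndex (n / 2) = n := by
  rcases n.even_or_odd' with ⟨k, rfl | rfl⟩
  · rw [← eq_natCast_iff_regionIndex_eq]
    push_cast
    exact mul_div_cancel_left₀ _ two_ne_zero
  · have lower : (k : ℝ≥0) < ((2 * k + 1 : ℕ) : ℝ≥0) / 2 := by
      rw [lt_div_iff₀ two_pos]
      norm_cast
      omega
    have upper : ((2 * k + 1 : ℕ) : ℝ≥0) / 2 < (k + 1 : ℕ) := by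
      rw [div_lt_iff₀ two_pos]
      norm_cast
      omega
    rw [natCast_lt_iff_lt_regionIndex] at lower
    rw [lt_natCast_iff_regionIndex_lt] at upper
    omega

theorem floor_add_fracPart (x : ℝ≥0) : (⌊x⌋₊ : ℝ≥0) + fracPart x = x :=
  add_tsub_cancel_of_le (Nat.floor_le zero_le)

theorem fracPart_lt_one (x : ℝ≥0) : fracPart x < 1 := by
  refine lt_of_add_lt_add_left (a := (⌊x⌋₊ : ℝ≥0)) ?_
  rw [floor_add_fracPart]
  exact Nat.lt_floor_add_one x

theorem fracPart_eq_zero_iff : fracPart x = 0 ↔ regionIndex x % 2 = 0 := by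
  have eq_floor : fracPart x = 0 ↔ x = ⌊x⌋₊ := by
    rw [fracPart, tsub_eq_zero_iff_le, le_antisymm_iff, and_iff_left (Nat.floor_le zero_le)]
  rw [eq_floor, eq_natCast_iff_regionIndex_eq, floor_eq_regionIndex_div_two]
  omega

theorem regEq_iff : RegEq K x y ↔ regionIndex x = regionIndex y ∨ (K < x ∧ K < y) := by
  rw [RegEq, floor_eq_regionIndex_div_two, floor_eq_regionIndex_div_two, fracPart_eq_zero_iff,
    fracPart_eq_zero_iff]
  refine or_congr_left ?_
  omega

theorem RegEq.refl (K : ℕ) (x : ℝ≥0) : RegEq K x x := regEq_iff.mpr (Or.inl rfl)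

theorem RegEq.symm (h : RegEq K x y) : RegEq K y x :=
  regEq_iff.mpr <| (regEq_iff.mp h).imp Eq.symm And.symm

theorem RegEq.natCast_lt_iff (h : RegEq K x y) (hm : m ≤ K) : (m : ℝ≥0) < x ↔ (m : ℝ≥0) < y := by
  rcases regEq_iff.mp h with h | ⟨hx, hy⟩
  · rw [natCast_lt_iff_lt_regionIndex, natCast_lt_iff_lt_regionIndex, h]
  · have hm : (m : ℝ≥0) ≤ K := mod_cast hm
    exact iff_of_true (hm.trans_lt hx) (hm.trans_lt hy)

theorem RegEq.lt_natCast_iff (h : RegEq K x y) (hm : m ≤ K) : x < m ↔ y < m := by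
  rcases regEq_iff.mp h with h | ⟨hx, hy⟩
  · rw [lt_natCast_iff_regionIndex_lt, lt_natCast_iff_regionIndex_lt, h]
  · have hm : (m : ℝ≥0) ≤ K := mod_cast hm
    exact iff_of_false (hm.trans_lt hx).not_gt (hm.trans_lt hy).not_gt

theorem RegEq.eq_natCast_iff (h : RegEq K x y) (hm : m ≤ K) : x = m ↔ y = m := by
  simp only [le_antisymm_iff, ← not_lt, h.natCast_lt_iff hm, h.lt_natCast_iff hm]

theorem RegEq.trans (hxy : RegEq K x y) (hyz : RegEq K y z) : RegEq K x z := by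
  rcases regEq_iff.mp hxy with h | ⟨hx, hy⟩
  · exact regEq_iff.mpr <| (regEq_iff.mp hyz).imp h.trans fun ⟨hy, hz⟩ =>
      ⟨(hxy.natCast_lt_iff le_rfl).mpr hy, hz⟩
  · exact regEq_iff.mpr (Or.inr ⟨hx, (hyz.natCast_lt_iff le_rfl).mp hy⟩)

theorem RegEq.resetStep (h : RegEq K x y) : RegEq K (resetStep K x) (resetStep K y) := by
  have same_reset : (∃ m : ℕ, m ≤ K ∧ x = m) ↔ ∃ m : ℕ, m ≤ K ∧ y = m :=
    exists_congr fun m => and_congr_right fun hm => h.eq_natCast_iff hm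
  simp only [IRTA.resetStep, same_reset]
  split_ifs
  · exact .refl K 0
  · exact h

theorem RegEq.sat_iff (h : RegEq K x y) {φ : CC} (hφ : φ.maxConst ≤ K) : φ.sat x ↔ φ.sat y := by
  induction φ with
  | lt m => exact h.lt_natCast_iff hφ
  | gt m => exact h.natCast_lt_iff hφ
  | eq m => exact h.eq_natCast_iff hφ
  | and φ ψ ihφ ihψ =>
    rw [CC.maxConst, max_le_iff] at hφ
    exact and_congr (ihφ hφ.1) (ihψ hφ.2)

end Regions

section Truncation

variable {K : ℕ} {x y t : ℝ≥0}

/-- Equality of clock values truncated at `K`: on the values `c^K` this is the relation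
`c^K_⊤(u) = c^K_⊤(v)`. -/
def AgreeUpTo (K : ℕ) (x y : ℝ≥0) : Prop := x = y ∨ (K < x ∧ K < y)

theorem AgreeUpTo.regEq (h : AgreeUpTo K x y) : RegEq K x y :=
  regEq_iff.mpr <| h.imp_left (congrArg regionIndex)

theorem AgreeUpTo.add_right (h : AgreeUpTo K x y) (t : ℝ≥0) : AgreeUpTo K (x + t) (y + t) :=
  h.imp (congrArg (· + t)) fun ⟨hx, hy⟩ =>
    ⟨hx.trans_le le_self_add, hy.trans_le le_self_add⟩

theorem resetStep_of_lt (h : K < x) : resetStep K x = x := by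
  refine if_neg ?_
  rintro ⟨m, hm, rfl⟩
  exact absurd hm (not_le.mpr (mod_cast h))

theorem AgreeUpTo.resetStep (h : AgreeUpTo K x y) :
    AgreeUpTo K (resetStep K x) (resetStep K y) := by
  rcases h with rfl | ⟨hx, hy⟩
  · exact Or.inl rfl
  · rw [resetStep_of_lt hx, resetStep_of_lt hy]
    exact Or.inr ⟨hx, hy⟩

theorem AgreeUpTo.cKAux (h : AgreeUpTo K x y) (d : Timestamp) :
    AgreeUpTo K (cKAux K x d) (cKAux K y d) := by
  induction d generalizing x y with
  | nil => exact h
  | cons t _ ih => exact ih (h.add_right t).resetStep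

theorem fScale_self {lam : ℝ≥0} (ht : t < 1) : fScale lam lam t = t := by
  rw [fScale]
  split_ifs with hlam
  · rw [div_mul_comm]
    refine div_mul_cancel_of_imp fun h => ?_
    rwa [h, nonpos_iff_eq_zero] at hlam
  · have hlam : lam < t := not_le.mp hlam
    rw [div_self (tsub_pos_of_lt (hlam.trans ht)).ne', one_mul, add_tsub_cancel_of_le hlam.le]

theorem AgreeUpTo.tauStep_eq (h : AgreeUpTo K x y) (t : ℝ≥0) : tauStep K x y t = t := by
  rw [tauStep]
  split_ifs with hxy
  · rfl
  · obtain rfl := h.resolve_right fun hK => hxy (Or.inr hK)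
    rw [fScale_self (fracPart_lt_one t), floor_add_fracPart]

theorem AgreeUpTo.tauWAux_eq {A : Type} (h : AgreeUpTo K x y) (w : TimedWord A) :
    tauWAux K x y w = w := by
  induction w generalizing x y with
  | nil => rfl
  | cons p w ih => rw [tauWAux, h.tauStep_eq, ih (h.add_right p.1).resetStep]

theorem AgreeUpTo.tauW_eq_id {A : Type} (h : AgreeUpTo K x y) :
    (tauW K x y : TimedWord A → TimedWord A) = id :=
  funext h.resetStep.tauWAux_eq

theorem cKTop_eq_iff {A : Type} {u v : TimedWord A} :
    cKTop K u = cKTop K v ↔ AgreeUpTo K (cKW K u) (cKW K v) := by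
  rw [cKTop, cKTop, AgreeUpTo]
  split_ifs with hu hv hv
  · rw [WithTop.coe_inj]
    exact (or_iff_left fun h => hu.not_gt h.1).symm
  · exact iff_of_false WithTop.coe_ne_top (by grind)
  · exact iff_of_false WithTop.top_ne_coe (by grind)
  · exact iff_of_true rfl (Or.inr ⟨not_le.mp hu, not_le.mp hv⟩)

end Truncation

section HalfIntegrality

variable {K n : ℕ} {x y : ℝ≥0}

/-- Half-integral numbers, as natural multiples of `1 / 2`. -/
def IsHalfInt (x : ℝ≥0) : Prop := ∃ n : ℕ, x = n / 2

theorem isHalfInt_iff_eq_regionIndex : IsHalfInt x ↔ x = regionIndex x / 2 := by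
  refine ⟨?_, fun h => ⟨_, h⟩⟩
  rintro ⟨n, rfl⟩
  rw [regionIndex_natCast_div_two]

theorem fracPart_natCast_div_two : fracPart (n / 2) = (n % 2 : ℕ) / 2 := by
  rw [fracPart, floor_eq_regionIndex_div_two, regionIndex_natCast_div_two]
  refine tsub_eq_of_eq_add ?_
  nth_rw 1 [← Nat.mod_add_div n 2]
  push_cast
  field_simp

theorem isHalfInt_iff_fracPart : IsHalfInt x ↔ fracPart x = 0 ∨ fracPart x = 1 / 2 := by
  constructor
  · rintro ⟨n, rfl⟩
    rw [fracPart_natCast_div_two]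
    rcases n.mod_two_eq_zero_or_one with hn | hn <;> simp [hn]
  · rintro (h | h)
    · refine ⟨2 * ⌊x⌋₊, ?_⟩
      nth_rw 1 [← floor_add_fracPart x, h]
      push_cast
      field_simp
      simp
    · refine ⟨2 * ⌊x⌋₊ + 1, ?_⟩
      nth_rw 1 [← floor_add_fracPart x, h]
      push_cast
      field_simp

theorem IsHalfInt.add (hx : IsHalfInt x) (hy : IsHalfInt y) : IsHalfInt (x + y) := by
  obtain ⟨m, rfl⟩ := hx
  obtain ⟨n, rfl⟩ := hy
  exact ⟨m + n, by push_cast; rw [add_div]⟩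

theorem isHalfInt_zero : IsHalfInt 0 := ⟨0, by simp⟩

theorem IsHalfInt.resetStep (hx : IsHalfInt x) : IsHalfInt (resetStep K x) := by
  rw [IRTA.resetStep]
  split_ifs
  · exact isHalfInt_zero
  · exact hx

theorem IsHalfInt.cKAux (hx : IsHalfInt x) {d : Timestamp} (hd : ∀ t ∈ d, IsHalfInt t) :
    IsHalfInt (cKAux K x d) := by
  induction d generalizing x with
  | nil => exact hx
  | cons t _ ih =>
    rw [List.forall_mem_cons] at hd
    exact ih (hx.add hd.1).resetStep hd.2

theorem RegEq.agreeUpTo (h : RegEq K x y) (hx : IsHalfInt x) (hy : IsHalfInt y) :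
    AgreeUpTo K x y := by
  rw [isHalfInt_iff_eq_regionIndex] at hx hy
  exact (regEq_iff.mp h).imp_left fun hxy => by rw [hx, hy, hxy]

theorem isSigmaK_natCast_div_two (hn : n ≤ 2 * K + 1) : IsSigmaK K (n / 2) := by
  refine ⟨isHalfInt_iff_fracPart.mp ⟨n, rfl⟩, ?_⟩
  calc (n / 2 : ℝ≥0) ≤ (2 * K + 1 : ℕ) / 2 := by gcongr
    _ = K + 1 / 2 := by push_cast; field_simp

theorem RegEq.exists_isSigmaK_add (h : RegEq K x y) (hy : IsHalfInt y) (t : ℝ≥0) :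
    ∃ s, IsSigmaK K s ∧ RegEq K (x + t) (y + s) := by
  by_cases hK : K < x + t
  · refine ⟨(2 * K + 1 : ℕ) / 2, isSigmaK_natCast_div_two le_rfl, regEq_iff.mpr (Or.inr ⟨hK, ?_⟩)⟩
    refine lt_add_of_nonneg_of_lt zero_le ?_
    rw [natCast_lt_iff_lt_regionIndex, regionIndex_natCast_div_two]
    omega
  · have not_lt_x : ¬ K < x := fun hx => hK (hx.trans_le le_self_add)
    have index_eq : regionIndex x = regionIndex y :=
      (regEq_iff.mp h).resolve_right fun hxy => not_lt_x hxy.1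
    have index_le : regionIndex y ≤ regionIndex (x + t) :=
      index_eq ▸ regionIndex_mono le_self_add
    refine ⟨(regionIndex (x + t) - regionIndex y : ℕ) / 2, isSigmaK_natCast_div_two ?_,
      regEq_iff.mpr (Or.inl ?_)⟩
    · rw [natCast_lt_iff_lt_regionIndex] at hK
      omega
    · calc regionIndex (x + t)
          = regionIndex ((regionIndex y + (regionIndex (x + t) - regionIndex y) : ℕ) / 2) := by
            rw [regionIndex_natCast_div_two, Nat.add_sub_of_le index_le]
        _ = regionIndex (y + (regionIndex (x + t) - regionIndex y : ℕ) / 2) := by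
            rw [Nat.cast_add, add_div, ← isHalfInt_iff_eq_regionIndex.mp hy]

end HalfIntegrality

section Words

variable {A : Type} {K : ℕ} {u v w : TimedWord A}

theorem cKAux_append (x : ℝ≥0) (d e : Timestamp) :
    cKAux K x (d ++ e) = cKAux K (cKAux K x d) e := by
  induction d generalizing x with
  | nil => rfl
  | cons t _ ih => exact ih _

theorem cKW_append (u z : TimedWord A) :
    cKW K (u ++ z) = cKAux K (cKW K u) (z.map Prod.fst) := by
  rw [cKW, cK, List.map_append, cKAux_append, cKW, cK]

theorem cKW_append_singleton (u : TimedWord A) (t : ℝ≥0) (a : A) :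
    cKW K (u ++ [(t, a)]) = resetStep K (cKW K u + t) :=
  cKW_append u [(t, a)]

theorem AgreeUpTo.cKW_append (h : AgreeUpTo K (cKW K u) (cKW K v)) (z : TimedWord A) :
    AgreeUpTo K (cKW K (u ++ z)) (cKW K (v ++ z)) := by
  rw [IRTA.cKW_append, IRTA.cKW_append]
  exact h.cKAux _

theorem SigmaWord.halfIntegral (hw : SigmaWord K w) : HalfIntegral w := fun p hp => (hw p hp).1

theorem HalfIntegral.append (hu : HalfIntegral u) (hv : HalfIntegral v) : HalfIntegral (u ++ v) :=
  List.forall_mem_append.mpr ⟨hu, hv⟩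

theorem HalfIntegral.isHalfInt_cKW (hw : HalfIntegral w) : IsHalfInt (cKW K w) :=
  isHalfInt_zero.cKAux <| List.forall_mem_map.mpr fun p hp => isHalfInt_iff_fracPart.mpr (hw p hp)

theorem approxLK_iff_residual_eq {L : Set (TimedWord A)} (hu : HalfIntegral u)
    (hv : HalfIntegral v) :
    ApproxLK L K u v ↔ AgreeUpTo K (cKW K u) (cKW K v) ∧ residual L u = residual L v := by
  have regEq_iff_agreeUpTo : RegEq K (cKW K u) (cKW K v) ↔ AgreeUpTo K (cKW K u) (cKW K v) :=
    ⟨fun h => h.agreeUpTo hu.isHalfInt_cKW hv.isHalfInt_cKW, AgreeUpTo.regEq⟩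
  rw [ApproxLK, regEq_iff_agreeUpTo]
  exact and_congr_right fun h => by rw [h.tauW_eq_id, Set.image_id]

end Words

section Monotonic

variable {A : Type} {K : ℕ} {L : Set (TimedWord A)} {r : TimedWord A → TimedWord A → Prop}
  {u v : TimedWord A}

theorem KMonotonic.exists_sigmaWord (hr : ∀ w, r w w) (hmono : KMonotonic K r)
    (hu : HalfIntegral u) (huv : AgreeUpTo K (cKW K u) (cKW K v)) (z : TimedWord A) :
    ∃ z', SigmaWord K z' ∧ r (u ++ z) (u ++ z') ∧ r (v ++ z) (v ++ z') := by
  induction z using List.reverseRecOn with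
  | nil => exact ⟨[], List.forall_mem_nil _, hr _, hr _⟩
  | append_singleton z p ih =>
    obtain ⟨t, a⟩ := p
    obtain ⟨z', hz', hruz, hrvz⟩ := ih
    have half : IsHalfInt (cKW K (u ++ z')) := (hu.append hz'.halfIntegral).isHalfInt_cKW
    obtain ⟨t', ht', regEq_u⟩ := (hmono _ _ hruz).1.exists_isSigmaK_add half t
    have regEq_v : RegEq K (cKW K (v ++ z) + t) (cKW K (v ++ z') + t') :=
      ((huv.cKW_append z).add_right t).regEq.symm.trans <|
        regEq_u.trans ((huv.cKW_append z').add_right t').regEq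
    refine ⟨z' ++ [(t', a)], ?_, ?_, ?_⟩
    · exact List.forall_mem_append.mpr ⟨hz', List.forall_mem_singleton.mpr ht'⟩
    · simpa only [List.append_assoc] using (hmono _ _ hruz).2 a t t' regEq_u
    · simpa only [List.append_assoc] using (hmono _ _ hrvz).2 a t t' regEq_v

theorem KMonotonic.residual_eq_iff (hr : ∀ w, r w w) (hL : LPreserving L r)
    (hmono : KMonotonic K r) (hu : HalfIntegral u) (huv : AgreeUpTo K (cKW K u) (cKW K v)) :
    residual L u = residual L v ↔ ∀ z, SigmaWord K z → (u ++ z ∈ L ↔ v ++ z ∈ L) := by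
  refine ⟨fun h z _ => Set.ext_iff.mp h z, fun h => Set.ext fun z => ?_⟩
  obtain ⟨z', hz', hruz, hrvz⟩ := hmono.exists_sigmaWord hr hu huv z
  calc u ++ z ∈ L ↔ u ++ z' ∈ L := hL _ _ hruz
    _ ↔ v ++ z' ∈ L := h z' hz'
    _ ↔ v ++ z ∈ L := (hL _ _ hrvz).symm

theorem statement18_general (hr : ∀ w, r w w) (hL : LPreserving L r) (hmono : KMonotonic K r)
    (hu : HalfIntegral u) (hv : HalfIntegral v) :
    ApproxLK L K u v ↔
      (cKTop K u = cKTop K v ∧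
        ∀ z : TimedWord A, SigmaWord K z → (u ++ z ∈ L ↔ v ++ z ∈ L)) := by
  rw [approxLK_iff_residual_eq hu hv, cKTop_eq_iff]
  exact and_congr_right fun huv => hmono.residual_eq_iff hr hL hu huv

end Monotonic

section Automata

variable {A : Type} {M : TA A} {K : ℕ} {w : TimedWord A}

/-- Reachability of a control state by reading a timed word from the initial configuration. -/
def TA.Reaches (M : TA A) (w : TimedWord A) (q : M.Q) : Prop :=
  ∃ ν : ℝ≥0, Steps M (M.init, 0) w (q, ν)

/-- Two timed words are indistinguishable by `M` if their values of `c^K` lie in the same region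
and they reach the same control states. Comparing whole sets of states makes this meaningful
for automata that are neither deterministic nor complete. -/
def TA.Indistinguishable (M : TA A) (K : ℕ) (u v : TimedWord A) : Prop :=
  RegEq K (cKW K u) (cKW K v) ∧ ∀ q, M.Reaches u q ↔ M.Reaches v q

theorem steps_append_singleton {c c' : M.Q × ℝ≥0} {t : ℝ≥0} {a : A} :
    Steps M c (w ++ [(t, a)]) c' ↔
      ∃ θ ∈ M.trans, ∃ ν, Steps M c w (θ.src, ν) ∧ θ.lab = a ∧ θ.guard.sat (ν + t) ∧
        c' = (θ.dst, if θ.reset then 0 else ν + t) := by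
  induction w generalizing c with
  | nil =>
    constructor
    · rintro (_ | ⟨θ, hθ, rfl, hlab, hg, _ | _⟩)
      exact ⟨θ, hθ, _, .nil _, hlab, hg, rfl⟩
    · rintro ⟨θ, hθ, ν, ⟨⟩, hlab, hg, rfl⟩
      exact .cons θ hθ rfl hlab hg (.nil _)
  | cons _ _ ih =>
    constructor
    · rintro (_ | ⟨θ₀, hθ₀, hsrc₀, hlab₀, hg₀, hrest⟩)
      obtain ⟨θ, hθ, ν, hw, hstep⟩ := ih.mp hrest
      exact ⟨θ, hθ, ν, .cons θ₀ hθ₀ hsrc₀ hlab₀ hg₀ hw, hstep⟩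
    · rintro ⟨θ, hθ, ν, _ | ⟨θ₀, hθ₀, hsrc₀, hlab₀, hg₀, hrest⟩, hstep⟩
      exact .cons θ₀ hθ₀ hsrc₀ hlab₀ hg₀ (ih.mpr ⟨θ, hθ, ν, hrest, hstep⟩)

theorem StrictGuard.exists_eq_iff {φ : CC} (hφ : StrictGuard K φ) (hK : φ.maxConst ≤ K) {x : ℝ≥0}
    (hx : φ.sat x) : (∃ m : ℕ, φ = CC.eq m) ↔ ∃ m : ℕ, m ≤ K ∧ x = m := by
  constructor
  · rintro ⟨m, rfl⟩
    exact ⟨m, hK, hx⟩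
  · rintro ⟨n, hn, rfl⟩
    rcases hφ with h | ⟨m, rfl⟩ | rfl
    · exact h
    · obtain ⟨hmn, hnm⟩ := hx
      have hmn : m < n := Nat.cast_lt.mp hmn
      have hnm : n < m + 1 := Nat.cast_lt.mp hnm
      omega
    · exact absurd hn (Nat.cast_lt.mp hx).not_ge

theorem TA.IsStrict.clock_update_eq (hS : M.IsStrict K) (hM : M.MaxConstLE K)
    {θ : TTrans M.Q A} (hθ : θ ∈ M.trans) {x : ℝ≥0} (hx : θ.guard.sat x) :
    (if θ.reset then 0 else x) = resetStep K x := by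
  obtain ⟨strict, eq_iff_reset⟩ := hS θ hθ
  simp only [resetStep, ← strict.exists_eq_iff (hM θ hθ) hx, eq_iff_reset]

theorem TA.IsStrict.clock_eq_cKAux (hS : M.IsStrict K) (hM : M.MaxConstLE K)
    {c c' : M.Q × ℝ≥0} (h : Steps M c w c') : c'.2 = cKAux K c.2 (w.map Prod.fst) := by
  induction h with
  | nil => rfl
  | cons θ hθ _ _ hg _ ih => rw [ih, hS.clock_update_eq hM hθ hg, List.map_cons, cKAux]

theorem TA.IsStrict.clock_eq_cKW (hS : M.IsStrict K) (hM : M.MaxConstLE K) {q : M.Q} {ν : ℝ≥0}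
    (h : Steps M (M.init, 0) w (q, ν)) : ν = cKW K w :=
  hS.clock_eq_cKAux hM h

theorem TA.IsStrict.reaches_append_singleton_iff (hS : M.IsStrict K) (hM : M.MaxConstLE K)
    {t : ℝ≥0} {a : A} {q : M.Q} :
    M.Reaches (w ++ [(t, a)]) q ↔
      ∃ θ ∈ M.trans, M.Reaches w θ.src ∧ θ.lab = a ∧ θ.guard.sat (cKW K w + t) ∧ q = θ.dst := by
  constructor
  · rintro ⟨_, h⟩
    obtain ⟨θ, hθ, ν, hw, hlab, hg, hdst⟩ := steps_append_singleton.mp h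
    rw [hS.clock_eq_cKW hM hw] at hg
    exact ⟨θ, hθ, ⟨ν, hw⟩, hlab, hg, congrArg Prod.fst hdst⟩
  · rintro ⟨θ, hθ, ⟨ν, hw⟩, hlab, hg, rfl⟩
    rw [← hS.clock_eq_cKW hM hw] at hg
    exact ⟨_, steps_append_singleton.mpr ⟨θ, hθ, ν, hw, hlab, hg, rfl⟩⟩

theorem TA.mem_lang_iff : w ∈ M.Lang ↔ ∃ q, M.Reaches w q ∧ q ∈ M.final := by
  simp only [TA.Lang, TA.LangFrom, Set.mem_ofPred_eq, TA.Reaches, exists_and_right]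

theorem TA.indistinguishable_refl (M : TA A) (K : ℕ) (w : TimedWord A) :
    M.Indistinguishable K w w :=
  ⟨.refl _ _, fun _ => Iff.rfl⟩

theorem TA.lPreserving_indistinguishable (M : TA A) (K : ℕ) :
    LPreserving M.Lang (M.Indistinguishable K) := fun u v h => by
  simp only [TA.mem_lang_iff, h.2]

theorem TA.IsStrict.kMonotonic_indistinguishable (hS : M.IsStrict K) (hM : M.MaxConstLE K) :
    KMonotonic K (M.Indistinguishable K) := by
  rintro u v ⟨regEq, same_states⟩
  refine ⟨regEq, fun a t t' h => ⟨?_, fun q => ?_⟩⟩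
  · rw [cKW_append_singleton, cKW_append_singleton]
    exact h.resetStep
  · rw [hS.reaches_append_singleton_iff hM, hS.reaches_append_singleton_iff hM]
    refine exists_congr fun θ => and_congr_right fun hθ => ?_
    rw [same_states, h.sat_iff (hM θ hθ)]

end Automata

/-- on small half-integral words, `≈^{L,K}` is characterized by
`c^K_⊤` and membership of `Σ_K`-extensions. -/
theorem statement18 {A : Type} [Finite A] (K : ℕ) (L : Set (TimedWord A))
    (B : TA A) (hB : IsKAcceptor B K) (hL : B.Lang = L)
    (u v : TimedWord A) (hu : SigmaWord K u) (hv : SigmaWord K v) :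
    ApproxLK L K u v ↔
      (cKTop K u = cKTop K v ∧
        ∀ z : TimedWord A, SigmaWord K z → (u ++ z ∈ L ↔ v ++ z ∈ L)) := by
  obtain ⟨-, -, -, -, hS, hM, -⟩ := hB
  exact statement18_general (B.indistinguishable_refl K) (hL ▸ B.lPreserving_indistinguishable K)
    (hS.kMonotonic_indistinguishable hM) hu.halfIntegral hv.halfIntegral

end IRTA
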